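/- (Main convergence theorem for the exponentiated gradient method with Armijo line search.) Let U be an open convex set of d×d complex matrices containing the set D of density matrices, and let f : U → ℝ be convex and differentiable with Hermitian gradient f', where f' is locally Lipschitz on U (every point of U has a neighborhood in U on which f' is Lipschitz with respect to the Frobenius norm). Fix parameters α > 0, r ∈ (0,1), τ ∈ (0,1), and let (ρ_k) in D and (α_k) be generated by the exponentiated gradient method with Armijo line search. Then every cluster point ρ̄ of the sequence (ρ_k) minimizes f on D, i.e., f(ρ̄) ≤ f(σ) for every density matrix σ. -/

import Mathlib

open scoped Matrix ComplexOrder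

noncomputable section

/-- The space of `d × d` complex matrices. -/
abbrev Mat (d : ℕ) := Matrix (Fin d) (Fin d) ℂ

/-- Matrix exponential of a Hermitian matrix, via the real continuous functional calculus
(i.e. the functional calculus on the eigenvalues). -/
noncomputable def mexp {d : ℕ} (A : Mat d) : Mat d := cfc Real.exp A

/-- Matrix logarithm of a positive definite Hermitian matrix, via the real continuous
functional calculus. -/
noncomputable def mlog {d : ℕ} (A : Mat d) : Mat d := cfc Real.log A

/-- A density matrix: Hermitian, positive semidefinite, trace one. -/
def IsDensity {d : ℕ} (ρ : Mat d) : Prop := ρ.PosSemidef ∧ ρ.trace = 1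

/-- The real part of the Hilbert–Schmidt inner product `tr (Xᴴ Y)` (which is real
when `X` and `Y` are Hermitian). -/
noncomputable def hsInner {d : ℕ} (X Y : Mat d) : ℝ := (Matrix.trace (Xᴴ * Y)).re

/-- `tr (σ log σ) = ∑ᵢ λᵢ log λᵢ` over the eigenvalues of `σ` (the convention
`0 log 0 = 0` matches `Real.log 0 = 0`), via the functional calculus for `x ↦ x log x`. -/
noncomputable def trEnt {d : ℕ} (σ : Mat d) : ℝ :=
  (Matrix.trace (cfc (fun x : ℝ => x * Real.log x) σ)).re

/-- The quantum relative entropy `D(σ, ρ) = tr (σ log σ) - tr (σ log ρ)` (for `σ` a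
density matrix and `ρ` a nonsingular density matrix). -/
noncomputable def qRelEnt {d : ℕ} (σ ρ : Mat d) : ℝ :=
  trEnt σ - (Matrix.trace (σ * mlog ρ)).re

/-- The exponentiated-gradient step `ρ_G(α) = c⁻¹ exp (log ρ - α G)` where
`c = tr exp (log ρ - α G)`. -/
noncomputable def egStep {d : ℕ} (ρ G : Mat d) (α : ℝ) : Mat d :=
  (Matrix.trace (mexp (mlog ρ - α • G)))⁻¹ • mexp (mlog ρ - α • G)

attribute [local instance] Matrix.frobeniusNormedAddCommGroup Matrix.frobeniusNormedSpace

/-- `f` is (Fréchet) differentiable at `x` with gradient `g`, with respect to the real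
inner product `Re tr (Xᴴ Y)`: the derivative is `V ↦ Re tr (gᴴ V)`. -/
def HasMatGradientAt {d : ℕ} (f : Mat d → ℝ) (g : Mat d) (x : Mat d) : Prop :=
  ∃ L : Mat d →L[ℝ] ℝ, HasFDerivAt f L x ∧ ∀ V : Mat d, L V = (Matrix.trace (gᴴ * V)).re

/-- The sequences `(ρ_k)` and `(α_k)` are generated by the exponentiated gradient method
with Armijo line search with parameters `α > 0`, `r ∈ (0,1)`, `τ ∈ (0,1)`: the initial
iterate is nonsingular, `ρ_{k+1} = ρ_k(α_k)`, each `α_k = α rᵐ` for some natural `m`, the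
Armijo condition holds at `α_k`, and either `m = 0` or the Armijo condition fails at
`α_k / r`. -/
def IsEGArmijo {d : ℕ} (f : Mat d → ℝ) (f' : Mat d → Mat d) (α r τ : ℝ)
    (ρseq : ℕ → Mat d) (αseq : ℕ → ℝ) : Prop :=
  (ρseq 0).PosDef ∧
  (∀ k, ρseq (k + 1) = egStep (ρseq k) (f' (ρseq k)) (αseq k)) ∧
  (∀ k, ∃ m : ℕ, αseq k = α * r ^ m ∧
    f (ρseq (k + 1)) ≤ f (ρseq k) + τ * hsInner (f' (ρseq k)) (ρseq (k + 1) - ρseq k) ∧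
    (m = 0 ∨
      f (egStep (ρseq k) (f' (ρseq k)) (αseq k / r)) >
        f (ρseq k) +
          τ * hsInner (f' (ρseq k)) (egStep (ρseq k) (f' (ρseq k)) (αseq k / r) - ρseq k)))

/-!
Write `D` for the relative entropy. On `[0, 1]` the function `x log x - x² / 2` is convex, so
Klein's inequality yields `‖σ - ρ‖² / 2 ≤ D(σ, ρ)`. Together with the three-point identity
`β ⟨G, ρ_G(β) - σ⟩ = D(σ, ρ) - D(σ, ρ_G(β)) - D(ρ_G(β), ρ)` this shows that a step `β` moves `ρ`
by at most `‖ρ_G(β) - ρ‖² ≤ -β ⟨G, ρ_G(β) - ρ⟩`. Since the gradient is Lipschitz on the compact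
set of density matrices, the Armijo condition can then fail only at steps bounded away from `0`,
so the accepted steps `α_k` are bounded below.

The same identity, the Armijo condition and convexity give, for every density matrix `σ`,
`α_k (f(ρ_k) - f(σ) - (f(ρ_k) - f(ρ_{k+1})) / τ) ≤ D(σ, ρ_k) - D(σ, ρ_{k+1})`. As `f(ρ_k)`
decreases to `f(ρbar)`, a positive gap `f(ρbar) - f(σ)` would push the nonnegative quantity
`D(σ, ρ_k)` to `-∞`.
-/

theorem convexOn_add_le_of_hasFDerivAt {E : Type*} [NormedAddCommGroup E] [NormedSpace ℝ E]
    {s : Set E} {f : E → ℝ} {L : E →L[ℝ] ℝ} {x y : E} (hf : ConvexOn ℝ s f) (hx : x ∈ s)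
    (hy : y ∈ s) (hL : HasFDerivAt f L x) : f x + L (y - x) ≤ f y := by
  have hline : ConvexOn ℝ (Set.Icc (0 : ℝ) 1) (f ∘ AffineMap.lineMap x y) :=
    (hf.comp_affineMap (AffineMap.lineMap (k := ℝ) x y)).subset
      (fun _ ht => hf.1.lineMap_mem hx hy ht) (convex_Icc _ _)
  have hderiv : HasDerivAt (f ∘ AffineMap.lineMap x y) (L (y - x)) (0 : ℝ) := by
    refine HasFDerivAt.comp_hasDerivAt 0 ?_ AffineMap.hasDerivAt_lineMap
    rwa [AffineMap.lineMap_apply_zero]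
  have hslope := hline.le_slope_of_hasDerivAt (Set.left_mem_Icc.2 zero_le_one)
    (Set.right_mem_Icc.2 zero_le_one) zero_lt_one hderiv
  simp only [slope_def_field, Function.comp_apply, AffineMap.lineMap_apply_zero,
    AffineMap.lineMap_apply_one, sub_zero, div_one] at hslope
  linarith

theorem locallyLipschitzOn_of_norm_sub_le {E F : Type*} [SeminormedAddCommGroup E]
    [SeminormedAddCommGroup F] {s : Set E} {g : E → F}
    (h : ∀ x ∈ s, ∃ V ∈ nhds x, ∃ L : ℝ, ∀ a ∈ V, ∀ b ∈ V, ‖g a - g b‖ ≤ L * ‖a - b‖) :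
    LocallyLipschitzOn s g := by
  intro x hx
  obtain ⟨V, hV, L, hL⟩ := h x hx
  refine ⟨L.toNNReal, V, mem_nhdsWithin_of_mem_nhds hV, .of_dist_le_mul fun a ha b hb => ?_⟩
  rw [dist_eq_norm, dist_eq_norm]
  exact (hL a ha b hb).trans (by gcongr; exact Real.le_coe_toNNReal L)

theorem hasDerivAt_mul_log_sub_sq {x : ℝ} (hx : x ≠ 0) :
    HasDerivAt (fun x : ℝ => x * Real.log x - x ^ 2 / 2) (Real.log x + 1 - x) x := by
  simpa using (Real.hasDerivAt_mul_log hx).fun_sub ((hasDerivAt_pow 2 x).div_const 2)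

theorem convexOn_mul_log_sub_sq :
    ConvexOn ℝ (Set.Icc 0 1) (fun x : ℝ => x * Real.log x - x ^ 2 / 2) := by
  refine convexOn_of_hasDerivWithinAt2_nonneg (f' := fun x => Real.log x + 1 - x)
    (f'' := fun x => x⁻¹ - 1) (convex_Icc 0 1) (by fun_prop) ?_ ?_ ?_ <;> rw [interior_Icc] <;>
    intro x hx
  · exact (hasDerivAt_mul_log_sub_sq hx.1.ne').hasDerivWithinAt
  · exact (((Real.hasDerivAt_log hx.1.ne').add_const 1).sub (hasDerivAt_id x)).hasDerivWithinAt
  · exact sub_nonneg.2 ((one_le_inv₀ hx.1).2 hx.2.le)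

theorem mul_log_sub_sq_tangent_le {a b : ℝ} (ha : a ∈ Set.Icc (0 : ℝ) 1)
    (hb : b ∈ Set.Ioc (0 : ℝ) 1) :
    b * Real.log b - b ^ 2 / 2 + (a - b) * (Real.log b + 1 - b) ≤
      a * Real.log a - a ^ 2 / 2 := by
  simpa using convexOn_add_le_of_hasFDerivAt convexOn_mul_log_sub_sq (Set.Ioc_subset_Icc_self hb)
    ha (hasDerivAt_mul_log_sub_sq hb.1.ne').hasFDerivAt

theorem nonpos_of_tendsto_of_mul_le_sub {D t g : ℕ → ℝ} {δ l : ℝ} (hδ : 0 < δ)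
    (ht : ∀ k, δ ≤ t k) (hD : ∀ k, 0 ≤ D k) (hg : Filter.Tendsto g Filter.atTop (nhds l))
    (h : ∀ k, t k * g k ≤ D k - D (k + 1)) : l ≤ 0 := by
  by_contra! hl
  have hc : 0 < δ * (l / 2) := by positivity
  obtain ⟨N, hN⟩ := Filter.eventually_atTop.1 (hg.eventually_const_le (half_lt_self hl))
  have hdecr (n : ℕ) : D (N + n) ≤ D N - n * (δ * (l / 2)) := by
    induction n with
    | zero => simp
    | succ n ih =>
      have hstep : δ * (l / 2) ≤ D (N + n) - D (N + n + 1) :=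
        (mul_le_mul (ht _) (hN _ (Nat.le_add_right N n)) (by positivity)
          (hδ.le.trans (ht _))).trans (h _)
      rw [← add_assoc]
      push_cast
      linarith
  obtain ⟨n, hn⟩ := exists_nat_gt (D N / (δ * (l / 2)))
  linarith [hdecr n, hD (N + n), (div_lt_iff₀ hc).1 hn]

theorem tendsto_of_antitone_of_mapClusterPt {X : Type*} [TopologicalSpace X]
    [ConditionallyCompleteLinearOrder X] [OrderTopology X] [NoMinOrder X]
    [FirstCountableTopology X] {u : ℕ → X} {l : X} (hu : Antitone u)
    (hl : MapClusterPt l Filter.atTop u) : Filter.Tendsto u Filter.atTop (nhds l) := by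
  obtain ⟨ψ, hψ, hlim⟩ := hl.tendsto_subseq
  exact (tendsto_iff_tendsto_subseq_of_antitone hu hψ.tendsto_atTop).2 hlim

section Spectral

variable {n 𝕜 : Type*} [RCLike 𝕜] [Fintype n] [DecidableEq n] {A B : Matrix n n 𝕜}

theorem continuousOn_spectrum_real (A : Matrix n n 𝕜) (φ : ℝ → ℝ) :
    ContinuousOn φ (spectrum ℝ A) :=
  A.finite_real_spectrum.continuousOn φ

/-- The transition probabilities `|⟨uᵢ, vⱼ⟩|²` between the orthonormal eigenbases `u` of `A` and
`v` of `B`. They are the weights that express mixed traces of functions of `A` and `B` through the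
eigenvalues. -/
def spectralOverlap (hA : A.IsHermitian) (hB : B.IsHermitian) (i j : n) : ℝ :=
  ‖(star (hA.eigenvectorUnitary : Matrix n n 𝕜) * (hB.eigenvectorUnitary : Matrix n n 𝕜)) i j‖ ^ 2

theorem re_trace_cfc_mul_cfc (hA : A.IsHermitian) (hB : B.IsHermitian) (φ ψ : ℝ → ℝ) :
    RCLike.re (cfc φ A * cfc ψ B).trace =
      ∑ i, ∑ j, spectralOverlap hA hB i j * (φ (hA.eigenvalues i) * ψ (hB.eigenvalues j)) := by
  set U : Matrix n n 𝕜 := (hA.eigenvectorUnitary : Matrix n n 𝕜)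
  set V : Matrix n n 𝕜 := (hB.eigenvectorUnitary : Matrix n n 𝕜)
  set W := star U * V with hW
  have hcyc (F G : Matrix n n 𝕜) :
      (U * F * star U * (V * G * star V)).trace = (F * W * (G * star W)).trace := by
    calc (U * F * star U * (V * G * star V)).trace
        = (U * (F * star U * V * G * star V)).trace := by simp only [mul_assoc]
      _ = (F * W * (G * star W)).trace := by
        rw [Matrix.trace_mul_comm, hW, star_mul, star_star]
        simp only [mul_assoc]
  rw [hA.cfc_eq, hB.cfc_eq, Matrix.IsHermitian.cfc, Matrix.IsHermitian.cfc,
    Unitary.conjStarAlgAut_apply, Unitary.conjStarAlgAut_apply, hcyc, Matrix.trace, map_sum]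
  refine Finset.sum_congr rfl fun i _ => ?_
  rw [Matrix.diag_apply, Matrix.mul_apply, map_sum]
  refine Finset.sum_congr rfl fun j _ => ?_
  rw [Matrix.diagonal_mul, Matrix.diagonal_mul, Matrix.star_apply, mul_mul_mul_comm,
    mul_right_comm, mul_assoc, RCLike.star_def, RCLike.mul_conj]
  simp only [Function.comp_apply]
  rw [← RCLike.ofReal_pow, ← RCLike.ofReal_mul, ← RCLike.ofReal_mul, RCLike.ofReal_re,
    mul_left_comm]
  rfl

theorem spectralOverlap_nonneg (hA : A.IsHermitian) (hB : B.IsHermitian) (i j : n) :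
    0 ≤ spectralOverlap hA hB i j :=
  sq_nonneg _

theorem klein_inequality (hA : A.IsHermitian) (hB : B.IsHermitian) {φ φ' : ℝ → ℝ}
    (h : ∀ a ∈ spectrum ℝ A, ∀ b ∈ spectrum ℝ B, φ b + (a - b) * φ' b ≤ φ a) :
    RCLike.re (cfc φ B).trace + RCLike.re ((A - B) * cfc φ' B).trace ≤
      RCLike.re (cfc φ A).trace := by
  have hB' : B * cfc φ' B = cfc (fun _ => 1 : ℝ → ℝ) A * cfc (fun x => x * φ' x) B := by
    rw [cfc_const_one ℝ A hA.isSelfAdjoint, one_mul, cfc_mul _ _ B (continuousOn_spectrum_real B _)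
      (continuousOn_spectrum_real B _), cfc_id' ℝ B hB.isSelfAdjoint]
  have hA' : A * cfc φ' B = cfc (fun x : ℝ => x) A * cfc φ' B := by
    rw [cfc_id' ℝ A hA.isSelfAdjoint]
  have hφA : cfc φ A = cfc φ A * cfc (fun _ => 1 : ℝ → ℝ) B := by
    rw [cfc_const_one ℝ B hB.isSelfAdjoint, mul_one]
  have hφB : cfc φ B = cfc (fun _ => 1 : ℝ → ℝ) A * cfc φ B := by
    rw [cfc_const_one ℝ A hA.isSelfAdjoint, one_mul]
  rw [sub_mul, Matrix.trace_sub, map_sub, hA', hB', hφA, hφB]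
  simp only [re_trace_cfc_mul_cfc hA hB, ← Finset.sum_sub_distrib, ← Finset.sum_add_distrib]
  refine Finset.sum_le_sum fun i _ => Finset.sum_le_sum fun j _ => ?_
  have hij := mul_le_mul_of_nonneg_left (h _ (hA.eigenvalues_mem_spectrum_real i) _
    (hB.eigenvalues_mem_spectrum_real j)) (spectralOverlap_nonneg hA hB i j)
  linarith

end Spectral

section Density

open scoped MatrixOrder

variable {d : ℕ} {ρ H : Mat d}

theorem isHermitian_mlog (A : Mat d) : (mlog A).IsHermitian :=
  cfc_predicate (R := ℝ) (p := IsSelfAdjoint) Real.log A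

theorem posDef_mexp (hH : H.IsHermitian) : (mexp H).PosDef := by
  rw [← Matrix.isStrictlyPositive_iff_posDef]
  exact (cfc_isStrictlyPositive_iff Real.exp H (continuousOn_spectrum_real H _)
    hH.isSelfAdjoint).2 fun x _ => Real.exp_pos x

theorem spectrum_pos_of_posDef (h : ρ.PosDef) : spectrum ℝ ρ ⊆ Set.Ioi 0 :=
  (StarOrderedRing.isStrictlyPositive_iff_spectrum_pos ρ h.isHermitian.isSelfAdjoint).1
    h.isStrictlyPositive

theorem IsDensity.spectrum_subset_Icc (hρ : IsDensity ρ) : spectrum ℝ ρ ⊆ Set.Icc 0 1 := by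
  rw [hρ.1.isHermitian.spectrum_real_eq_range_eigenvalues]
  rintro _ ⟨i, rfl⟩
  refine ⟨hρ.1.eigenvalues_nonneg i, ?_⟩
  have hsum : ∑ j, hρ.1.isHermitian.eigenvalues j = 1 := by
    have h := hρ.1.isHermitian.trace_eq_sum_eigenvalues.symm.trans hρ.2
    exact RCLike.ofReal_injective (K := ℂ) (by simpa using h)
  rw [← hsum]
  exact Finset.single_le_sum (fun j _ => hρ.1.eigenvalues_nonneg j) (Finset.mem_univ i)

theorem mlog_smul_mexp (hH : H.IsHermitian) {c : ℝ} (hc : c ≠ 0) :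
    mlog (c • mexp H) = H + Real.log c • (1 : Mat d) := by
  have hlog : (fun x => Real.log (c • Real.exp x)) = fun x => x + Real.log c := by
    funext x
    rw [smul_eq_mul, Real.log_mul hc (Real.exp_pos x).ne', Real.log_exp, add_comm]
  rw [mexp, mlog, ← cfc_smul c _ H (continuousOn_spectrum_real H _),
    ← cfc_comp' Real.log (fun x => c • Real.exp x) H
      ((H.finite_real_spectrum.image _).continuousOn _) (continuousOn_spectrum_real H _)
      hH.isSelfAdjoint, hlog, cfc_add_const _ _ H (continuousOn_spectrum_real H _) hH.isSelfAdjoint,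
    cfc_id' ℝ H hH.isSelfAdjoint, Algebra.algebraMap_eq_smul_one]

theorem IsDensity.re_trace_mul_self_le_one (hρ : IsDensity ρ) : (ρ * ρ).trace.re ≤ 1 := by
  have hpos : (cfc (fun x : ℝ => x - x * x) ρ).PosSemidef := by
    refine Matrix.nonneg_iff_posSemidef.1 (cfc_nonneg fun x hx => ?_)
    obtain ⟨hx₀, hx₁⟩ := hρ.spectrum_subset_Icc hx
    nlinarith
  have hsa := hρ.1.isHermitian.isSelfAdjoint
  rw [cfc_sub _ _ ρ (continuousOn_spectrum_real ρ _) (continuousOn_spectrum_real ρ _),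
    cfc_mul _ _ ρ (continuousOn_spectrum_real ρ _) (continuousOn_spectrum_real ρ _),
    cfc_id' ℝ ρ hsa] at hpos
  have htrace := (Complex.le_def.1 hpos.trace_nonneg).1
  rw [Matrix.trace_sub, hρ.2] at htrace
  simpa using htrace

theorem trEnt_eq (hρ : ρ.IsHermitian) : trEnt ρ = (ρ * mlog ρ).trace.re := by
  rw [trEnt, cfc_mul _ _ ρ (continuousOn_spectrum_real ρ _) (continuousOn_spectrum_real ρ _),
    cfc_id' ℝ ρ hρ.isSelfAdjoint, mlog]

end Density

section HilbertSchmidt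

variable {d : ℕ} {X : Mat d}

theorem hsInner_sub_right (X Y Z : Mat d) : hsInner X (Y - Z) = hsInner X Y - hsInner X Z := by
  simp only [hsInner, mul_sub, Matrix.trace_sub, Complex.sub_re]

theorem hsInner_sub_left (X Y Z : Mat d) : hsInner (X - Y) Z = hsInner X Z - hsInner Y Z := by
  simp only [hsInner, Matrix.conjTranspose_sub, sub_mul, Matrix.trace_sub, Complex.sub_re]

theorem hsInner_eq_of_isHermitian (hX : X.IsHermitian) (Y : Mat d) :
    hsInner X Y = (Y * X).trace.re := by
  rw [hsInner, hX.eq, Matrix.trace_mul_comm]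

theorem hsInner_eq_sum (X Y : Mat d) :
    hsInner X Y = ∑ p : Fin d × Fin d, inner ℝ (X p.1 p.2) (Y p.1 p.2) := by
  rw [Fintype.sum_prod_type_right, hsInner, Matrix.trace, Complex.re_sum]
  refine Finset.sum_congr rfl fun j _ => ?_
  rw [Matrix.diag_apply, Matrix.mul_apply, Complex.re_sum]
  refine Finset.sum_congr rfl fun i _ => ?_
  rw [Matrix.conjTranspose_apply, Complex.inner, Complex.star_def, mul_comm]

theorem norm_sq_eq_hsInner_self (X : Mat d) : ‖X‖ ^ 2 = hsInner X X := by
  rw [Matrix.frobenius_norm_def, ← Real.sqrt_eq_rpow, Real.sq_sqrt (by positivity),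
    hsInner_eq_sum, Fintype.sum_prod_type]
  simp only [real_inner_self_eq_norm_sq, Real.rpow_two]

theorem hsInner_le_norm_mul_norm (X Y : Mat d) : hsInner X Y ≤ ‖X‖ * ‖Y‖ := by
  have hsum (Z : Mat d) : ∑ p : Fin d × Fin d, ‖Z p.1 p.2‖ ^ 2 = ‖Z‖ ^ 2 := by
    simp only [norm_sq_eq_hsInner_self, hsInner_eq_sum, real_inner_self_eq_norm_sq]
  calc hsInner X Y ≤ ∑ p : Fin d × Fin d, ‖X p.1 p.2‖ * ‖Y p.1 p.2‖ := by
        rw [hsInner_eq_sum]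
        exact Finset.sum_le_sum fun p _ => real_inner_le_norm _ _
    _ ≤ √(∑ p : Fin d × Fin d, ‖X p.1 p.2‖ ^ 2) * √(∑ p : Fin d × Fin d, ‖Y p.1 p.2‖ ^ 2) :=
        Real.sum_mul_le_sqrt_mul_sqrt _ _ _
    _ = ‖X‖ * ‖Y‖ := by
        rw [hsum, hsum, Real.sqrt_sq (norm_nonneg X), Real.sqrt_sq (norm_nonneg Y)]

end HilbertSchmidt

section Entropy

variable {d : ℕ} {ρ σ G : Mat d}

theorem IsDensity.neZero {d : ℕ} {ρ : Mat d} (hρ : IsDensity ρ) : NeZero d := by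
  refine ⟨?_⟩
  rintro rfl
  exact zero_ne_one ((Matrix.trace_fin_zero ρ).symm.trans hρ.2)

theorem isClosed_setOf_isDensity : IsClosed {σ : Mat d | IsDensity σ} := by
  have hinter : {σ : Mat d | IsDensity σ} = {σ : Mat d | σᴴ = σ} ∩
      (⋂ x : Fin d → ℂ, {σ : Mat d | 0 ≤ star x ⬝ᵥ (σ *ᵥ x)}) ∩ {σ : Mat d | σ.trace = 1} := by
    ext σ
    simp only [IsDensity, Matrix.posSemidef_iff_dotProduct_mulVec, Set.mem_ofPred_eq,
      Set.mem_inter_iff, Set.mem_iInter, Matrix.IsHermitian]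
  rw [hinter]
  refine (IsClosed.inter ?_ (isClosed_iInter fun x => ?_)).inter ?_
  · exact isClosed_eq continuous_id.matrix_conjTranspose continuous_id
  · exact isClosed_le continuous_const
      (continuous_const.dotProduct (continuous_id.matrix_mulVec continuous_const))
  · exact isClosed_eq continuous_id.matrix_trace continuous_const

theorem IsDensity.norm_le_one (hσ : IsDensity σ) : ‖σ‖ ≤ 1 := by
  rw [← sq_le_one_iff₀ (norm_nonneg σ), norm_sq_eq_hsInner_self,
    hsInner_eq_of_isHermitian hσ.1.isHermitian]
  exact hσ.re_trace_mul_self_le_one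

theorem isCompact_setOf_isDensity : IsCompact {σ : Mat d | IsDensity σ} := by
  have : ProperSpace (Mat d) := FiniteDimensional.proper ℝ (Mat d)
  exact Metric.isCompact_of_isClosed_isBounded isClosed_setOf_isDensity
    (Metric.isBounded_closedBall.subset fun σ hσ => mem_closedBall_zero_iff.2 hσ.norm_le_one)

theorem convex_setOf_isDensity : Convex ℝ {σ : Mat d | IsDensity σ} := by
  rintro σ hσ ρ hρ a b ha hb hab
  refine ⟨(hσ.1.smul ha).add (hρ.1.smul hb), ?_⟩
  rw [Matrix.trace_add, Matrix.trace_smul, Matrix.trace_smul, hσ.2, hρ.2, ← add_smul, hab, one_smul]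

theorem qRelEnt_self (hρ : ρ.IsHermitian) : qRelEnt ρ ρ = 0 := by
  rw [qRelEnt, trEnt_eq hρ, sub_self]

theorem re_trace_cfc_mul_log_sub_sq (hρ : ρ.IsHermitian) :
    (cfc (fun x : ℝ => x * Real.log x - x ^ 2 / 2) ρ).trace.re = trEnt ρ - ‖ρ‖ ^ 2 / 2 := by
  have hsq : cfc (fun x : ℝ => x ^ 2 / 2) ρ = (1 / 2 : ℝ) • (ρ * ρ) := by
    have hfun : (fun x : ℝ => x ^ 2 / 2) = fun x => (1 / 2 : ℝ) • x ^ 2 := by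
      funext x
      rw [smul_eq_mul]
      ring
    rw [hfun, cfc_smul _ _ ρ (continuousOn_spectrum_real ρ _), cfc_pow_id ρ 2 hρ.isSelfAdjoint,
      pow_two]
  rw [cfc_sub _ _ ρ (continuousOn_spectrum_real ρ _) (continuousOn_spectrum_real ρ _), hsq,
    norm_sq_eq_hsInner_self, hsInner_eq_of_isHermitian hρ, Matrix.trace_sub, Matrix.trace_smul,
    Complex.sub_re, Complex.smul_re, trEnt, smul_eq_mul]
  ring

theorem cfc_log_add_one_sub (hρ : ρ.IsHermitian) :
    cfc (fun x : ℝ => Real.log x + 1 - x) ρ = mlog ρ + 1 - ρ := by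
  rw [cfc_sub _ _ ρ (continuousOn_spectrum_real ρ _) (continuousOn_spectrum_real ρ _),
    cfc_add_const 1 _ ρ (continuousOn_spectrum_real ρ _) hρ.isSelfAdjoint, map_one,
    cfc_id' ℝ ρ hρ.isSelfAdjoint, mlog]

theorem half_norm_sub_sq_le_qRelEnt (hσ : IsDensity σ) (hρ : IsDensity ρ) (hpos : ρ.PosDef) :
    ‖σ - ρ‖ ^ 2 / 2 ≤ qRelEnt σ ρ := by
  have hσ' := hσ.1.isHermitian
  have hρ' := hρ.1.isHermitian
  have hklein := klein_inequality (φ := fun x => x * Real.log x - x ^ 2 / 2)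
    (φ' := fun x => Real.log x + 1 - x) hσ' hρ' fun a ha b hb =>
      mul_log_sub_sq_tangent_le (hσ.spectrum_subset_Icc ha)
        ⟨spectrum_pos_of_posDef hpos hb, (hρ.spectrum_subset_Icc hb).2⟩
  have hexpand : ((σ - ρ) * (mlog ρ + 1 - ρ)).trace.re =
      (σ * mlog ρ).trace.re - trEnt ρ - ((σ - ρ) * ρ).trace.re := by
    rw [trEnt_eq hρ', mul_sub, mul_add, mul_one, sub_mul, Matrix.trace_sub, Matrix.trace_add,
      Matrix.trace_sub, Matrix.trace_sub σ, hσ.2, hρ.2, sub_self, add_zero, Complex.sub_re,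
      Complex.sub_re]
  have hnorm : ‖σ - ρ‖ ^ 2 = ‖σ‖ ^ 2 - ‖ρ‖ ^ 2 - 2 * ((σ - ρ) * ρ).trace.re := by
    simp only [norm_sq_eq_hsInner_self, hsInner_eq_of_isHermitian hσ',
      hsInner_eq_of_isHermitian hρ', hsInner_eq_of_isHermitian (hσ'.sub hρ'), mul_sub, sub_mul,
      Matrix.trace_sub, Complex.sub_re, Matrix.trace_mul_comm ρ σ]
    ring
  rw [cfc_log_add_one_sub hρ'] at hklein
  simp only [RCLike.re_eq_complex_re, re_trace_cfc_mul_log_sub_sq hσ',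
    re_trace_cfc_mul_log_sub_sq hρ', hexpand] at hklein
  rw [qRelEnt]
  linarith

theorem qRelEnt_nonneg (hσ : IsDensity σ) (hρ : IsDensity ρ) (hpos : ρ.PosDef) :
    0 ≤ qRelEnt σ ρ :=
  (by positivity : 0 ≤ ‖σ - ρ‖ ^ 2 / 2).trans (half_norm_sub_sq_le_qRelEnt hσ hρ hpos)

theorem isHermitian_mlog_sub_smul (ρ : Mat d) (hG : G.IsHermitian) (β : ℝ) :
    (mlog ρ - β • G).IsHermitian :=
  (isHermitian_mlog ρ).sub (hG.smul (IsSelfAdjoint.all β))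

variable [NeZero d]

theorem exists_pos_egStep_eq_smul_mexp (ρ : Mat d) (hG : G.IsHermitian) (β : ℝ) :
    ∃ c : ℝ, 0 < c ∧ egStep ρ G β = c • mexp (mlog ρ - β • G) := by
  obtain ⟨hre, him⟩ :=
    Complex.lt_def.1 (posDef_mexp (isHermitian_mlog_sub_smul ρ hG β)).trace_pos
  have htrace : (mexp (mlog ρ - β • G)).trace = ((mexp (mlog ρ - β • G)).trace.re : ℂ) :=
    Complex.ext rfl him.symm
  refine ⟨_, inv_pos.2 hre, ?_⟩
  rw [egStep, htrace, ← Complex.ofReal_inv, Complex.coe_smul, Complex.ofReal_re]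

theorem posDef_egStep (ρ : Mat d) (hG : G.IsHermitian) (β : ℝ) : (egStep ρ G β).PosDef := by
  obtain ⟨c, hc, h⟩ := exists_pos_egStep_eq_smul_mexp ρ hG β
  rw [h]
  exact (posDef_mexp (isHermitian_mlog_sub_smul ρ hG β)).smul hc

theorem isDensity_egStep (ρ : Mat d) (hG : G.IsHermitian) (β : ℝ) : IsDensity (egStep ρ G β) := by
  refine ⟨(posDef_egStep ρ hG β).posSemidef, ?_⟩
  rw [egStep, Matrix.trace_smul, smul_eq_mul,
    inv_mul_cancel₀ (posDef_mexp (isHermitian_mlog_sub_smul ρ hG β)).trace_pos.ne']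

theorem exists_smul_eq_mlog_sub_mlog_egStep (ρ : Mat d) (hG : G.IsHermitian) (β : ℝ) :
    ∃ s : ℝ, β • G = mlog ρ - mlog (egStep ρ G β) + s • (1 : Mat d) := by
  obtain ⟨c, hc, h⟩ := exists_pos_egStep_eq_smul_mexp ρ hG β
  refine ⟨Real.log c, ?_⟩
  rw [h, mlog_smul_mexp (isHermitian_mlog_sub_smul ρ hG β) hc.ne']
  abel

theorem mul_hsInner_egStep_sub_eq (ρ : Mat d) (hG : G.IsHermitian) (hσ : σ.trace = 1) (β : ℝ) :
    β * hsInner G (egStep ρ G β - σ) =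
      qRelEnt σ ρ - qRelEnt σ (egStep ρ G β) - qRelEnt (egStep ρ G β) ρ := by
  obtain ⟨s, hs⟩ := exists_smul_eq_mlog_sub_mlog_egStep ρ hG β
  have hR := isDensity_egStep ρ hG β
  set R := egStep ρ G β
  have htrace : (R - σ).trace = 0 := by rw [Matrix.trace_sub, hR.2, hσ, sub_self]
  calc β * hsInner G (R - σ) = ((R - σ) * (β • G)).trace.re := by
        rw [hsInner_eq_of_isHermitian hG, Matrix.mul_smul, Matrix.trace_smul, Complex.smul_re,
          smul_eq_mul]
    _ = ((R - σ) * (mlog ρ - mlog R)).trace.re := by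
        rw [hs, mul_add, Matrix.mul_smul, mul_one, Matrix.trace_add, Matrix.trace_smul, htrace,
          smul_zero, add_zero]
    _ = qRelEnt σ ρ - qRelEnt σ R - qRelEnt R ρ := by
        simp only [qRelEnt, trEnt_eq hR.1.isHermitian, sub_mul, mul_sub, Matrix.trace_sub,
          Complex.sub_re]
        ring

theorem norm_egStep_sub_sq_le (hρ : IsDensity ρ) (hpos : ρ.PosDef) (hG : G.IsHermitian) (β : ℝ) :
    ‖egStep ρ G β - ρ‖ ^ 2 ≤ -(β * hsInner G (egStep ρ G β - ρ)) := by
  have hR := isDensity_egStep ρ hG β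
  have hRρ := half_norm_sub_sq_le_qRelEnt hR hρ hpos
  have hρR := half_norm_sub_sq_le_qRelEnt hρ hR (posDef_egStep ρ hG β)
  rw [norm_sub_rev] at hρR
  linarith [mul_hsInner_egStep_sub_eq ρ hG hρ.2 β, qRelEnt_self hρ.1.isHermitian]

end Entropy

section Descent

variable {d : ℕ} {s : Set (Mat d)} {f : Mat d → ℝ} {ρ g g' G x y : Mat d} {β τ L : ℝ}

theorem HasMatGradientAt.add_hsInner_le (hg : HasMatGradientAt f g x) (hf : ConvexOn ℝ s f)
    (hx : x ∈ s) (hy : y ∈ s) : f x + hsInner g (y - x) ≤ f y := by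
  obtain ⟨D, hD, hDg⟩ := hg
  rw [hsInner, ← hDg]
  exact convexOn_add_le_of_hasFDerivAt hf hx hy hD

theorem HasMatGradientAt.continuousAt (hg : HasMatGradientAt f g x) : ContinuousAt f x := by
  obtain ⟨D, hD, -⟩ := hg
  exact hD.continuousAt

theorem HasMatGradientAt.le_add_hsInner_add_sq (hg : HasMatGradientAt f g y)
    (hf : ConvexOn ℝ s f) (hx : x ∈ s) (hy : y ∈ s) (hL : ‖g - g'‖ ≤ L * ‖y - x‖) :
    f y ≤ f x + hsInner g' (y - x) + L * ‖y - x‖ ^ 2 := by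
  have htangent := hg.add_hsInner_le hf hy hx
  have hsymm : hsInner g (x - y) = -hsInner g (y - x) := by
    simp only [hsInner_sub_right, neg_sub]
  have hcs : hsInner (g - g') (y - x) ≤ L * ‖y - x‖ ^ 2 :=
    calc hsInner (g - g') (y - x) ≤ ‖g - g'‖ * ‖y - x‖ := hsInner_le_norm_mul_norm _ _
      _ ≤ L * ‖y - x‖ * ‖y - x‖ := by gcongr
      _ = L * ‖y - x‖ ^ 2 := by ring
  rw [hsInner_sub_left] at hcs
  linarith

theorem hsInner_egStep_sub_nonpos [NeZero d] (hρ : IsDensity ρ) (hpos : ρ.PosDef)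
    (hG : G.IsHermitian) (hβ : 0 < β) : hsInner G (egStep ρ G β - ρ) ≤ 0 := by
  have hprod := (sq_nonneg _).trans (norm_egStep_sub_sq_le hρ hpos hG β)
  exact nonpos_of_mul_nonpos_right (neg_nonneg.1 hprod) hβ

theorem div_le_of_armijo_fails [NeZero d] (hρ : IsDensity ρ) (hpos : ρ.PosDef)
    (hG : G.IsHermitian) (hβ : 0 < β) (hL : 0 < L)
    (hdescent : f (egStep ρ G β) ≤
      f ρ + hsInner G (egStep ρ G β - ρ) + L * ‖egStep ρ G β - ρ‖ ^ 2)
    (hfails : f ρ + τ * hsInner G (egStep ρ G β - ρ) < f (egStep ρ G β)) :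
    (1 - τ) / L ≤ β := by
  set q := hsInner G (egStep ρ G β - ρ)
  have hq₀ : q ≤ 0 := hsInner_egStep_sub_nonpos hρ hpos hG hβ
  have hnorm : L * ‖egStep ρ G β - ρ‖ ^ 2 ≤ L * -(β * q) := by
    gcongr
    exact norm_egStep_sub_sq_le hρ hpos hG β
  rw [div_le_iff₀ hL]
  by_contra! hlt
  linarith [mul_nonneg_of_nonpos_of_nonpos hq₀ (sub_nonpos.2 hlt.le)]

end Descent

namespace IsEGArmijo

variable {d : ℕ} {f : Mat d → ℝ} {f' : Mat d → Mat d} {α r τ : ℝ} {ρseq : ℕ → Mat d}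
  {αseq : ℕ → ℝ} {σ : Mat d}

theorem stepSize_pos (h : IsEGArmijo f f' α r τ ρseq αseq) (hα : 0 < α) (hr : 0 < r) (k : ℕ) :
    0 < αseq k := by
  obtain ⟨m, hm, -⟩ := h.2.2 k
  rw [hm]
  positivity

theorem armijo (h : IsEGArmijo f f' α r τ ρseq αseq) (k : ℕ) :
    f (ρseq (k + 1)) ≤ f (ρseq k) + τ * hsInner (f' (ρseq k)) (ρseq (k + 1) - ρseq k) := by
  obtain ⟨m, -, harmijo, -⟩ := h.2.2 k
  exact harmijo

variable [NeZero d]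

theorem posDef (h : IsEGArmijo f f' α r τ ρseq αseq) (hherm : ∀ k, (f' (ρseq k)).IsHermitian) :
    ∀ k, (ρseq k).PosDef
  | 0 => h.1
  | k + 1 => by
    rw [h.2.1 k]
    exact posDef_egStep _ (hherm k) _

theorem antitone (h : IsEGArmijo f f' α r τ ρseq αseq) (hα : 0 < α) (hr : 0 < r) (hτ : 0 ≤ τ)
    (hmem : ∀ k, IsDensity (ρseq k)) (hherm : ∀ k, (f' (ρseq k)).IsHermitian) :
    Antitone (f ∘ ρseq) := by
  refine antitone_nat_of_succ_le fun k => (h.armijo k).trans (add_le_of_nonpos_right ?_)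
  rw [h.2.1 k]
  exact mul_nonpos_of_nonneg_of_nonpos hτ (hsInner_egStep_sub_nonpos (hmem k) (h.posDef hherm k)
    (hherm k) (h.stepSize_pos hα hr k))

theorem min_le_stepSize (h : IsEGArmijo f f' α r τ ρseq αseq) (hα : 0 < α) (hr : 0 < r)
    (hmem : ∀ k, IsDensity (ρseq k)) (hherm : ∀ k, (f' (ρseq k)).IsHermitian)
    (hconv : ConvexOn ℝ {σ : Mat d | IsDensity σ} f)
    (hgrad : ∀ x, IsDensity x → HasMatGradientAt f (f' x) x) {K : NNReal} (hK : 0 < K)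
    (hlip : LipschitzOnWith K f' {σ : Mat d | IsDensity σ}) (k : ℕ) :
    min α (r * ((1 - τ) / K)) ≤ αseq k := by
  obtain ⟨m, hm, -, rfl | hfails⟩ := h.2.2 k
  · rw [hm, pow_zero, mul_one]
    exact min_le_left _ _
  · have hR := isDensity_egStep (ρseq k) (hherm k) (αseq k / r)
    have hstep := div_le_of_armijo_fails (hmem k) (h.posDef hherm k) (hherm k)
      (div_pos (h.stepSize_pos hα hr k) hr) hK
      ((hgrad _ hR).le_add_hsInner_add_sq hconv (hmem k) hR (hlip.norm_sub_le hR (hmem k))) hfails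
    exact (min_le_right _ _).trans ((le_div_iff₀' hr).1 hstep)

theorem exists_pos_le_stepSize (h : IsEGArmijo f f' α r τ ρseq αseq) (hα : 0 < α) (hr : 0 < r)
    (hτ : τ < 1) (hmem : ∀ k, IsDensity (ρseq k)) (hherm : ∀ k, (f' (ρseq k)).IsHermitian)
    (hconv : ConvexOn ℝ {σ : Mat d | IsDensity σ} f)
    (hgrad : ∀ x, IsDensity x → HasMatGradientAt f (f' x) x)
    (hlip : LocallyLipschitzOn {σ : Mat d | IsDensity σ} f') : ∃ δ > 0, ∀ k, δ ≤ αseq k := by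
  obtain ⟨K, hK⟩ := hlip.exists_lipschitzOnWith_of_compact isCompact_setOf_isDensity
  have hpos : 0 < K + 1 := add_pos_of_nonneg_of_pos K.2 one_pos
  refine ⟨min α (r * ((1 - τ) / (K + 1 : NNReal))), ?_,
    h.min_le_stepSize hα hr hmem hherm hconv hgrad hpos (hK.weaken le_self_add)⟩
  exact lt_min hα (mul_pos hr (div_pos (sub_pos.2 hτ) hpos))

theorem stepSize_mul_le_qRelEnt_sub (h : IsEGArmijo f f' α r τ ρseq αseq) (hα : 0 < α)
    (hr : 0 < r) (hτ : 0 < τ) (hmem : ∀ k, IsDensity (ρseq k))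
    (hherm : ∀ k, (f' (ρseq k)).IsHermitian) (hconv : ConvexOn ℝ {σ : Mat d | IsDensity σ} f)
    (hgrad : ∀ k, HasMatGradientAt f (f' (ρseq k)) (ρseq k)) (hσ : IsDensity σ) (k : ℕ) :
    αseq k * (f (ρseq k) - f σ - (f (ρseq k) - f (ρseq (k + 1))) / τ) ≤
      qRelEnt σ (ρseq k) - qRelEnt σ (ρseq (k + 1)) := by
  set G := f' (ρseq k)
  have hthree : αseq k * hsInner G (ρseq (k + 1) - σ) = qRelEnt σ (ρseq k) -
      qRelEnt σ (ρseq (k + 1)) - qRelEnt (ρseq (k + 1)) (ρseq k) := by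
    rw [h.2.1 k]
    exact mul_hsInner_egStep_sub_eq (ρseq k) (hherm k) hσ.2 (αseq k)
  have htangent : f (ρseq k) + hsInner G (σ - ρseq k) ≤ f σ :=
    (hgrad k).add_hsInner_le hconv (hmem k) hσ
  have hsearch : -hsInner G (ρseq (k + 1) - ρseq k) ≤ (f (ρseq k) - f (ρseq (k + 1))) / τ := by
    rw [le_div_iff₀ hτ]
    linarith [h.armijo k]
  calc αseq k * (f (ρseq k) - f σ - (f (ρseq k) - f (ρseq (k + 1))) / τ)
      ≤ αseq k * hsInner G (ρseq (k + 1) - σ) := by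
        refine mul_le_mul_of_nonneg_left ?_ (h.stepSize_pos hα hr k).le
        rw [hsInner_sub_right] at htangent hsearch ⊢
        linarith
    _ ≤ qRelEnt σ (ρseq k) - qRelEnt σ (ρseq (k + 1)) := by
        linarith [qRelEnt_nonneg (hmem (k + 1)) (hmem k) (h.posDef hherm k)]

end IsEGArmijo

theorem stmt_13_general {d : ℕ} {f : Mat d → ℝ} {f' : Mat d → Mat d}
    (hconv : ConvexOn ℝ {σ : Mat d | IsDensity σ} f)
    (hgrad : ∀ x, IsDensity x → HasMatGradientAt f (f' x) x)
    (hherm : ∀ x, IsDensity x → (f' x).IsHermitian)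
    (hlip : LocallyLipschitzOn {σ : Mat d | IsDensity σ} f')
    {α r τ : ℝ} (hα : 0 < α) (hr : 0 < r) (hτ : τ ∈ Set.Ioo (0 : ℝ) 1)
    {ρseq : ℕ → Mat d} {αseq : ℕ → ℝ} (hmem : ∀ k, IsDensity (ρseq k))
    (halg : IsEGArmijo f f' α r τ ρseq αseq) {ρbar : Mat d}
    (hbar : MapClusterPt ρbar Filter.atTop ρseq) {σ : Mat d} (hσ : IsDensity σ) :
    f ρbar ≤ f σ := by
  have := hσ.neZero
  have hherm' k := hherm _ (hmem k)
  obtain ⟨δ, hδ, hstep⟩ :=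
    halg.exists_pos_le_stepSize hα hr hτ.2 hmem hherm' hconv hgrad hlip
  have hρbar : IsDensity ρbar :=
    isClosed_setOf_isDensity.mem_of_mapClusterPt hbar (.of_forall hmem)
  have hlim : Filter.Tendsto (f ∘ ρseq) Filter.atTop (nhds (f ρbar)) :=
    tendsto_of_antitone_of_mapClusterPt (halg.antitone hα hr hτ.1.le hmem hherm')
      (hbar.continuousAt_comp (hgrad _ hρbar).continuousAt)
  have hgap : Filter.Tendsto (fun k => f (ρseq k) - f σ - (f (ρseq k) - f (ρseq (k + 1))) / τ)
      Filter.atTop (nhds (f ρbar - f σ)) := by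
    have hlimSucc := hlim.comp (Filter.tendsto_add_atTop_nat 1)
    simpa using (hlim.sub_const (f σ)).sub ((hlim.sub hlimSucc).div_const τ)
  have hnonneg k : 0 ≤ qRelEnt σ (ρseq k) := qRelEnt_nonneg hσ (hmem k) (halg.posDef hherm' k)
  exact sub_nonpos.1 (nonpos_of_tendsto_of_mul_le_sub hδ hstep hnonneg hgap
    (halg.stepSize_mul_le_qRelEnt_sub hα hr hτ.1 hmem hherm' hconv (fun k => hgrad _ (hmem k)) hσ))

/-- main convergence theorem: every cluster point of the iterates of the
exponentiated gradient method with Armijo line search minimizes `f` over the density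
matrices. -/
theorem stmt_13 {d : ℕ} (hd : 0 < d) (U : Set (Mat d)) (hUopen : IsOpen U)
    (hUconv : Convex ℝ U) (hDU : {σ : Mat d | IsDensity σ} ⊆ U)
    (f : Mat d → ℝ) (f' : Mat d → Mat d)
    (hconv : ConvexOn ℝ U f)
    (hgrad : ∀ x ∈ U, HasMatGradientAt f (f' x) x)
    (hherm : ∀ x ∈ U, (f' x).IsHermitian)
    (hlip : ∀ x ∈ U, ∃ V ∈ nhds x, V ⊆ U ∧
      ∃ L : ℝ, ∀ a ∈ V, ∀ b ∈ V, ‖f' a - f' b‖ ≤ L * ‖a - b‖)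
    (α r τ : ℝ) (hα : 0 < α) (hr : r ∈ Set.Ioo (0:ℝ) 1) (hτ : τ ∈ Set.Ioo (0:ℝ) 1)
    (ρseq : ℕ → Mat d) (αseq : ℕ → ℝ)
    (hmem : ∀ k, IsDensity (ρseq k))
    (halg : IsEGArmijo f f' α r τ ρseq αseq)
    (ρbar : Mat d) (hbar : MapClusterPt ρbar Filter.atTop ρseq) :
    ∀ σ : Mat d, IsDensity σ → f ρbar ≤ f σ := by
  intro σ hσ
  have hlip' : LocallyLipschitzOn U f' := locallyLipschitzOn_of_norm_sub_le fun x hx =>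
    let ⟨V, hV, _, hL⟩ := hlip x hx; ⟨V, hV, hL⟩
  exact stmt_13_general (hconv.subset hDU convex_setOf_isDensity) (fun x hx => hgrad x (hDU hx))
    (fun x hx => hherm x (hDU hx)) (hlip'.mono hDU) hα hr.1 hτ hmem halg hbar hσ

end
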